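/- Let K be an algebraically closed field, R = K[x_1, ..., x_d] a polynomial ring, G a finite group acting linearly on R, S = K[x_1, ..., x_d, y_1, ..., y_d], and I_G the Derksen ideal. Then every embedded associated prime of a power of I_G lies in the singular locus: if p ∈ Ass(S/I_G^n) for some n ≥ 1 and p is not a minimal prime of I_G, then (S/I_G)_p is not a regular local ring. -/

import Mathlib

/-!
Suppose `(S/I_G)_p` is regular. A regular local ring is a domain
(`isDomain_of_card_le_ringKrullDim`), so among the components `I_g` intersecting to `I_G` one
satisfies `I_G S_p = I_g S_p`; concretely `t I_g ⊆ I_G` for some `t ∉ p`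
(`exists_mul_le_of_isDomain_localization`). Hence `p`, being associated to `I_G ^ n`, is also
associated to `I_g ^ n`.

The change of variables `y_i ↦ y_i - g(x_i)` (`graphEquiv`) identifies `I_g` with the ideal of the
variables in `R[y_1, …, y_d]`, `R = K[x_1, …, x_d]`, whose powers are primary since `R` is a domain
(`mem_idealOfVars_of_mul_mem_pow`). So `p = I_g`, and `t I_g ⊆ I_G` shows that `p` is a minimal
prime of `I_G`.
-/

open MvPolynomial

/-- The `n`-th symbolic power of an ideal `I`:
`I^{(n)} = ⋂_{p ∈ Ass(A/I)} (Iⁿ A_p ∩ A)`. -/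
noncomputable def symbolicPower {A : Type*} [CommRing A] (I : Ideal A) (n : ℕ) : Ideal A :=
  ⨅ (p : Ideal A) (hp : p ∈ associatedPrimes A (A ⧸ I)),
    haveI : p.IsPrime := hp.isPrime
    Ideal.comap (algebraMap A (Localization.AtPrime p))
      (Ideal.map (algebraMap A (Localization.AtPrime p)) (I ^ n))

/-- The component `(y₁ - g(x₁), …, y_d - g(x_d))` of the Derksen ideal, in
`S = K[x₁, …, x_d, y₁, …, y_d]`, where the `x`-variables are indexed by `Sum.inl`
and the `y`-variables by `Sum.inr`. -/
noncomputable def derksenComponent (K : Type*) [Field K] (d : ℕ) {G : Type*} [Group G]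
    [MulSemiringAction G (MvPolynomial (Fin d) K)] (g : G) :
    Ideal (MvPolynomial (Fin d ⊕ Fin d) K) :=
  Ideal.span (Set.range fun i : Fin d =>
    X (Sum.inr i) - rename Sum.inl (g • (X i : MvPolynomial (Fin d) K)))

/-- The Derksen ideal `I_G = ⋂_{g ∈ G} (y₁ - g(x₁), …, y_d - g(x_d))`. -/
noncomputable def derksenIdeal (K : Type*) [Field K] (d : ℕ) (G : Type*) [Group G]
    [MulSemiringAction G (MvPolynomial (Fin d) K)] :
    Ideal (MvPolynomial (Fin d ⊕ Fin d) K) :=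
  ⨅ g : G, derksenComponent K d g


/-- A local ring is *regular* if it is Noetherian and its maximal ideal can be generated
by `dim A` elements. -/
def IsRegularLocal (A : Type*) [CommRing A] [IsLocalRing A] : Prop :=
  IsNoetherianRing A ∧ ∃ s : Finset A,
    Ideal.span (s : Set A) = IsLocalRing.maximalIdeal A ∧
      (s.card : WithBot (WithTop ℕ)) = ringKrullDim A

/-! ### Regular local rings are domains -/

open IsLocalRing in
/-- A Noetherian local ring whose maximal ideal is generated by at most `dim A` elements is a
domain. By induction on the number `r` of generators: take `x ∈ m` outside `m ^ 2` and outside all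
minimal primes. Then `A ⧸ (x)` satisfies the hypotheses for `r - 1`, so `(x)` is prime, and a
minimal prime inside `(x)` must be zero by Nakayama. -/
theorem isDomain_of_card_le_ringKrullDim (r : ℕ) :
    ∀ (A : Type*) [CommRing A] [IsLocalRing A] [IsNoetherianRing A] (s : Finset A),
      Ideal.span (s : Set A) = maximalIdeal A → s.card ≤ r →
      (r : WithBot ℕ∞) ≤ ringKrullDim A → IsDomain A := by
  classical
  induction r with
  | zero =>
    intro A _ _ _ s hs hcard _
    obtain rfl : s = ∅ := by simpa using hcard
    have hbot : maximalIdeal A = ⊥ := by simpa using hs.symm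
    exact (isField_iff_maximalIdeal_eq.mpr hbot).isDomain
  | succ r ih =>
    intro A _ _ _ s hs hcard hdim
    have hpos : 0 < ringKrullDim A :=
      lt_of_lt_of_le (by norm_cast; simp) hdim
    -- Prime avoidance for the minimal primes and the single non-prime ideal `m ^ 2`.
    obtain ⟨x, hxm, hx2, hxmin⟩ : ∃ x ∈ maximalIdeal A, x ∉ maximalIdeal A ^ 2 ∧
        ∀ P ∈ minimalPrimes A, x ∉ P := by
      by_contra! hcon
      have hsub : (maximalIdeal A : Set A) ⊆
          ⋃ i ∈ insert (maximalIdeal A ^ 2) (minimalPrimes A), ((id i : Ideal A) : Set A) := by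
        intro x hx
        by_cases h2 : x ∈ maximalIdeal A ^ 2
        · exact Set.mem_biUnion (Set.mem_insert _ _) h2
        · obtain ⟨P, hP, hxP⟩ := hcon x hx h2
          exact Set.mem_biUnion (Set.mem_insert_of_mem _ hP) hxP
      rw [Ideal.subset_union_prime_finite
        ((minimalPrimes.finite_of_isNoetherianRing A).insert _)
        (maximalIdeal A ^ 2) (maximalIdeal A ^ 2)] at hsub
      · obtain ⟨P, hP, hle⟩ := hsub
        rcases Set.mem_insert_iff.mp hP with rfl | hP
        · exact (maximalIdeal_sq_lt_of_ringKrullDim_ne_zero hpos.ne').not_ge hle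
        · have : P.IsPrime := hP.1.1
          have heq : maximalIdeal A = P := le_antisymm hle (le_maximalIdeal hP.1.1.ne_top)
          have h0 : (maximalIdeal A).height = 0 := by
            rw [Ideal.height_eq_zero_iff, heq]
            exact hP
          rw [← maximalIdeal_height_eq_ringKrullDim, h0] at hpos
          exact lt_irrefl _ hpos
      · intro i hi h1 _
        exact ((Set.mem_insert_iff.mp hi).resolve_left h1).1.1
    -- `x` can be exchanged for one of the generators.
    obtain ⟨y, hys, hy⟩ : ∃ y ∈ s, y ∈ Ideal.span (insert x (s.erase y : Set A)) := by
      have hx' := hxm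
      rw [← hs, Submodule.mem_span_finset] at hx'
      obtain ⟨c, -, hc⟩ := hx'
      obtain ⟨y, hys, hyc⟩ : ∃ y ∈ s, c y ∉ maximalIdeal A := by
        by_contra! hcon
        apply hx2
        rw [← hc, pow_two]
        refine Ideal.sum_mem _ fun y hy => Ideal.mul_mem_mul (hcon y hy) ?_
        rw [← hs]
        exact Ideal.subset_span hy
      refine ⟨y, hys, ?_⟩
      have hu : IsUnit (c y) := by simpa using hyc
      rw [← Ideal.unit_mul_mem_iff_mem _ hu]
      rw [← Finset.add_sum_erase _ _ hys] at hc
      have : c y * y = x - ∑ z ∈ s.erase y, c z • z := by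
        rw [← hc]; simp
      rw [this]
      refine sub_mem (Ideal.subset_span (Set.mem_insert _ _)) (Ideal.sum_mem _ fun z hz => ?_)
      exact Ideal.mul_mem_left _ _ (Ideal.subset_span (Set.mem_insert_of_mem _ hz))
    have hxle : Ideal.span {x} ≤ maximalIdeal A := by
      rwa [Ideal.span_singleton_le_iff_mem]
    have hspan : maximalIdeal A = Ideal.span (insert x (s.erase y : Set A)) := by
      apply le_antisymm
      · rw [← hs, Ideal.span_le]
        intro z hz
        by_cases hzy : z = y
        · exact hzy ▸ hy
        · exact Ideal.subset_span (Set.mem_insert_of_mem _ (Finset.mem_erase.mpr ⟨hzy, hz⟩))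
      · rw [Ideal.span_le, Set.insert_subset_iff]
        refine ⟨hxm, fun z hz => ?_⟩
        rw [← hs]
        exact Ideal.subset_span (Finset.mem_of_mem_erase hz)
    let B := A ⧸ Ideal.span {x}
    let π : A →+* B := Ideal.Quotient.mk (Ideal.span {x})
    have hπ : Function.Surjective π := Ideal.Quotient.mk_surjective
    have : Nontrivial B := Ideal.Quotient.nontrivial_iff.mpr
      (ne_top_of_le_ne_top Ideal.IsPrime.ne_top' hxle)
    have : IsLocalRing B := .of_surjective' π hπ
    have hmB : maximalIdeal B = (maximalIdeal A).map π := by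
      have := IsLocalHom.of_surjective π hπ
      exact (map_maximalIdeal_of_surjective π hπ).symm
    have hdom : IsDomain B := by
      refine ih B ((s.erase y).image π) ?_ ?_ ?_
      · rw [hmB, hspan, Ideal.map_span, Set.image_insert_eq]
        have : π x = 0 := Ideal.Quotient.eq_zero_iff_mem.mpr (Ideal.mem_span_singleton_self x)
        rw [this, Ideal.span_insert_zero, Finset.coe_image]
      · refine Finset.card_image_le.trans ?_
        rw [Finset.card_erase_of_mem hys]
        omega
      · have h1 := ringKrullDim_le_ringKrullDim_quotient_add_card ({x} : Finset A) (by
          rw [ringJacobson_eq_maximalIdeal]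
          simpa using hxm)
        rw [Finset.coe_singleton, Finset.card_singleton] at h1
        have h2 := hdim.trans h1
        push_cast at h2
        exact ENat.WithBot.add_le_add_natCast_right_iff (c := 1).mp (by exact_mod_cast h2)
    have hxprime : (Ideal.span {x}).IsPrime := (Ideal.Quotient.isDomain_iff_prime _).mp hdom
    -- A minimal prime `P` below `(x)` satisfies `P = x P`, so vanishes by Nakayama.
    obtain ⟨P, hP, hPle⟩ := Ideal.exists_minimalPrimes_le (bot_le : ⊥ ≤ Ideal.span {x})
    have hPp : P.IsPrime := hP.1.1
    have hPbot : P = ⊥ := by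
      refine Submodule.eq_bot_of_le_smul_of_le_jacobson_bot (maximalIdeal A) P
        (IsNoetherian.noetherian P) ?_ (maximalIdeal_le_jacobson _)
      intro z hz
      obtain ⟨w, rfl⟩ := Ideal.mem_span_singleton.mp (hPle hz)
      exact Ideal.mul_mem_mul hxm ((hPp.mem_or_mem hz).resolve_left (hxmin P hP))
    rw [hPbot] at hPp
    exact IsDomain.of_bot_isPrime A

/-! ### Powers of the components are primary -/

/-- Powers of the ideal of the variables over a domain are primary: otherwise `a` has nonzero
constant coefficient, and comparing the lowest-degree parts of `f` and `a * f` shows that `f` has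
no terms of degree less than `n`. -/
theorem mem_idealOfVars_of_mul_mem_pow {σ R : Type*} [CommRing R] [IsDomain R] (n : ℕ)
    {a f : MvPolynomial σ R} (haf : a * f ∈ idealOfVars σ R ^ n)
    (hf : f ∉ idealOfVars σ R ^ n) : a ∈ idealOfVars σ R := by
  classical
  by_contra ha
  have ha0 : a.coeff 0 ≠ 0 := by
    intro h0
    apply ha
    rw [← pow_one (idealOfVars σ R), mem_pow_idealOfVars_iff']
    intro x hx
    obtain rfl : x = 0 := (Finsupp.degree_eq_zero_iff x).mp (by simpa using hx)
    exact h0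
  have key : ∀ k ≤ n, f ∈ idealOfVars σ R ^ k := by
    intro k
    induction k with
    | zero => simp
    | succ k ih =>
      intro hk
      have hfk := (mem_pow_idealOfVars_iff' k f).mp (ih (by omega))
      rw [mem_pow_idealOfVars_iff']
      intro x hx
      rcases Nat.lt_succ_iff_lt_or_eq.mp hx with hlt | heq
      · exact hfk x hlt
      -- In degree `k`, the coefficients of `a * f` are those of `f` times `a.coeff 0`.
      have h0 := (mem_pow_idealOfVars_iff' n _).mp haf x (by omega)
      rw [coeff_mul, Finset.sum_eq_single (0, x)] at h0
      · exact (mul_eq_zero.mp h0).resolve_left ha0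
      · rintro ⟨u, v⟩ huv hne
        rw [Finset.HasAntidiagonal.mem_antidiagonal] at huv
        have hdeg : u.degree + v.degree = k := by
          rw [← map_add, huv, heq]
        have hu : u.degree ≠ 0 := by
          intro hu
          obtain rfl : u = 0 := (Finsupp.degree_eq_zero_iff u).mp hu
          apply hne
          simpa using huv
        rw [hfk v (by omega), mul_zero]
      · intro h
        simp at h
  exact hf (key n le_rfl)

/-- The isomorphism `K[x][y] ≃ K[x, y]` that is the identity on the `x_i` and sends `y_i` to
`y_i - u_i(x)`, so that the ideal of the variables `y` goes to the ideal of the graph of `u`. -/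
noncomputable def graphEquiv (K : Type*) [Field K] (d : ℕ)
    (u : Fin d → MvPolynomial (Fin d) K) :
    MvPolynomial (Fin d) (MvPolynomial (Fin d) K) ≃+* MvPolynomial (Fin d ⊕ Fin d) K :=
  RingEquiv.ofRingHom
    (eval₂Hom (rename Sum.inl : MvPolynomial (Fin d) K →ₐ[K] _).toRingHom
      fun i => X (Sum.inr i) - rename Sum.inl (u i))
    (aeval (Sum.elim (fun i => C (X i)) fun i => X i + C (u i)) :
      MvPolynomial (Fin d ⊕ Fin d) K →ₐ[K]
        MvPolynomial (Fin d) (MvPolynomial (Fin d) K)).toRingHom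
    (by
      ext i : 2
      · simp
      · rcases i with i | i <;> simp)
    (by
      have hC (p : MvPolynomial (Fin d) K) :
          (aeval (Sum.elim (fun i => C (X i)) fun i => X i + C (u i)) :
            MvPolynomial (Fin d ⊕ Fin d) K →ₐ[K]
              MvPolynomial (Fin d) (MvPolynomial (Fin d) K)) (rename Sum.inl p) = C p := by
        rw [aeval_rename]
        have : (aeval ((Sum.elim (fun i => C (X i)) fun i => X i + C (u i)) ∘ Sum.inl) :
            MvPolynomial (Fin d) K →ₐ[K] MvPolynomial (Fin d) (MvPolynomial (Fin d) K)) =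
            IsScalarTower.toAlgHom K _ _ := by
          ext i : 1
          simp [MvPolynomial.algebraMap_eq]
        rw [this]
        simp [MvPolynomial.algebraMap_eq]
      refine MvPolynomial.ringHom_ext (fun p => ?_) fun i => ?_
      · simpa using! hC p
      · have h := hC (u i)
        simp only [RingHom.comp_apply, AlgHom.toRingHom_eq_coe, RingHom.coe_coe, coe_eval₂Hom,
          eval₂_X, map_sub, aeval_X, Sum.elim_inr, RingHom.id_apply]
        rw [h, add_sub_cancel_right])

section Derksen

variable {K : Type*} [Field K] {d : ℕ} {G : Type*} [Group G]
  [MulSemiringAction G (MvPolynomial (Fin d) K)]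

theorem map_graphEquiv_idealOfVars (g : G) :
    (idealOfVars (Fin d) (MvPolynomial (Fin d) K)).map
      (graphEquiv K d fun i => g • (X i : MvPolynomial (Fin d) K)) =
      derksenComponent K d g := by
  rw [idealOfVars, Ideal.map_span, ← Set.range_comp, derksenComponent]
  congr 2
  ext1 i
  simp [graphEquiv]

theorem mem_derksenComponent_of_mul_mem_pow (g : G) (n : ℕ)
    {a f : MvPolynomial (Fin d ⊕ Fin d) K} (haf : a * f ∈ derksenComponent K d g ^ n)
    (hf : f ∉ derksenComponent K d g ^ n) : a ∈ derksenComponent K d g := by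
  set e := graphEquiv K d fun i => g • (X i : MvPolynomial (Fin d) K)
  have hmem (k : ℕ) (z) : z ∈ derksenComponent K d g ^ k ↔
      e.symm z ∈ idealOfVars (Fin d) (MvPolynomial (Fin d) K) ^ k := by
    rw [← map_graphEquiv_idealOfVars g, ← Ideal.map_pow]
    constructor
    · intro hz
      obtain ⟨w, hw, rfl⟩ := (Ideal.mem_map_of_equiv e z).mp hz
      simpa using hw
    · intro hz
      exact (Ideal.mem_map_of_equiv e z).mpr ⟨_, hz, by simp⟩
  rw [hmem] at hf
  rw [hmem, map_mul] at haf
  have := mem_idealOfVars_of_mul_mem_pow n haf hf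
  rw [← pow_one (idealOfVars _ _), ← hmem, pow_one] at this
  exact this

end Derksen

/-! ### Localizing the intersection -/

/-- If every element of a finitely generated ideal `J` is multiplied into `I` by some element
outside the prime `p`, a single such multiplier (a product over generators) serves for all of
`J`; that is, `J A_p ⊆ I A_p`. -/
theorem exists_notMem_mul_mem_of_fg {A : Type*} [CommRing A] {I J p : Ideal A} (hp : p.IsPrime)
    (hJ : J.FG) (h : ∀ f ∈ J, ∃ t, t ∉ p ∧ t * f ∈ I) :
    ∃ t, t ∉ p ∧ Ideal.span {t} * J ≤ I := by
  classical
  obtain ⟨s, rfl⟩ := hJ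
  choose! t ht using h
  refine ⟨∏ f ∈ s, t f, ?_, ?_⟩
  · rw [hp.prod_mem_iff]
    rintro ⟨f, hf, hmem⟩
    exact (ht f (Ideal.subset_span hf)).1 hmem
  · rw [Ideal.span_mul_span', Ideal.span_le]
    rintro _ ⟨_, rfl, f, hf, rfl⟩
    change (∏ f ∈ s, t f) * f ∈ I
    rw [← Finset.prod_erase_mul _ _ hf, mul_assoc]
    exact Ideal.mul_mem_left _ _ (ht f (Ideal.subset_span hf)).2

/-- If the local ring `(A/I)_q` of a finite intersection `I = ⋂ J i` is a domain, then one of the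
`J i` coincides with `I` near `q`: it is carried into `I` by an element outside the prime of `A`
corresponding to `q`. The index comes from applying primality of the kernel of `A → (A/I)_q`
to the intersection. -/
theorem exists_mul_le_of_isDomain_localization {A ι : Type*} [CommRing A] [Finite ι]
    {J : ι → Ideal A} (hJ : ∀ i, (J i).FG) {I : Ideal A} (hI : I = ⨅ i, J i)
    (q : Ideal (A ⧸ I)) [q.IsPrime] (hdom : IsDomain (Localization.AtPrime q)) :
    ∃ i t, t ∉ q.comap (Ideal.Quotient.mk I) ∧ Ideal.span {t} * J i ≤ I := by
  set p := q.comap (Ideal.Quotient.mk I)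
  have hpp : p.IsPrime := Ideal.IsPrime.comap _
  let φ : A →+* Localization.AtPrime q :=
    (algebraMap _ (Localization.AtPrime q)).comp (Ideal.Quotient.mk I)
  have hker : ∀ f, f ∈ RingHom.ker φ ↔ ∃ t, t ∉ p ∧ t * f ∈ I := by
    intro f
    rw [RingHom.mem_ker, RingHom.comp_apply,
      IsLocalization.map_eq_zero_iff q.primeCompl (Localization.AtPrime q)]
    constructor
    · rintro ⟨⟨m, hm⟩, hmf⟩
      obtain ⟨t, rfl⟩ := Ideal.Quotient.mk_surjective m
      refine ⟨t, hm, ?_⟩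
      rwa [← map_mul, Ideal.Quotient.eq_zero_iff_mem] at hmf
    · rintro ⟨t, ht, htf⟩
      refine ⟨⟨Ideal.Quotient.mk I t, ht⟩, ?_⟩
      rwa [← map_mul, Ideal.Quotient.eq_zero_iff_mem]
  have hle : I ≤ RingHom.ker φ := fun f hf =>
    (hker f).mpr ⟨1, fun h => hpp.ne_top ((Ideal.eq_top_iff_one _).mpr h), by simpa using hf⟩
  have := Fintype.ofFinite ι
  have hinf : Finset.univ.inf J ≤ RingHom.ker φ :=
    (Finset.inf_univ_eq_iInf J).trans_le (hI.ge.trans hle)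
  obtain ⟨i, -, hi⟩ := (Ideal.IsPrime.inf_le' (RingHom.ker_isPrime φ)).mp hinf
  obtain ⟨t, ht⟩ := exists_notMem_mul_mem_of_fg (I := I) hpp (hJ i) fun f hf => (hker f).mp (hi hf)
  exact ⟨i, t, ht⟩

/-- Every embedded associated prime of a power of the Derksen ideal lies in the singular
locus: if `p = q ∩ S` is an associated prime of `S/I_Gⁿ` that is not a minimal prime of
`I_G`, then the local ring `(S/I_G)_p` is not regular. -/
theorem embedded_prime_of_power_mem_singular_locus {K : Type*} [Field K] [IsAlgClosed K]
    (d : ℕ) (G : Type*) [Group G] [Finite G]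
    [MulSemiringAction G (MvPolynomial (Fin d) K)]
    (hC : ∀ (g : G) (c : K), g • (C c : MvPolynomial (Fin d) K) = C c)
    (hlin : ∀ (g : G) (i : Fin d), (g • (X i : MvPolynomial (Fin d) K)).IsHomogeneous 1)
    (n : ℕ) (hn : 1 ≤ n)
    (q : Ideal (MvPolynomial (Fin d ⊕ Fin d) K ⧸ derksenIdeal K d G)) [q.IsPrime]
    (hass : q.comap (Ideal.Quotient.mk (derksenIdeal K d G)) ∈
      associatedPrimes (MvPolynomial (Fin d ⊕ Fin d) K)
        (MvPolynomial (Fin d ⊕ Fin d) K ⧸ (derksenIdeal K d G ^ n)))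
    (hmin : q.comap (Ideal.Quotient.mk (derksenIdeal K d G)) ∉
      (derksenIdeal K d G).minimalPrimes) :
    ¬ IsRegularLocal (Localization.AtPrime q) := by
  rintro ⟨hnoeth, s, hs, hcard⟩
  have hdom : IsDomain (Localization.AtPrime q) :=
    isDomain_of_card_le_ringKrullDim s.card _ s hs le_rfl hcard.le
  obtain ⟨g, t, htp, htI⟩ := exists_mul_le_of_isDomain_localization
    (I := derksenIdeal K d G) (fun g : G => IsNoetherian.noetherian (derksenComponent K d g)) rfl q hdom
  have hpp : (q.comap (Ideal.Quotient.mk (derksenIdeal K d G))).IsPrime := Ideal.IsPrime.comap _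
  have hIp : derksenIdeal K d G ≤ q.comap (Ideal.Quotient.mk (derksenIdeal K d G)) :=
    fun f hf => by
      rw [Ideal.mem_comap, Ideal.Quotient.eq_zero_iff_mem.mpr hf]
      exact q.zero_mem
  have hIg : derksenIdeal K d G ≤ derksenComponent K d g := iInf_le _ g
  have hpg : q.comap (Ideal.Quotient.mk (derksenIdeal K d G)) ≤ derksenComponent K d g := by
    obtain ⟨-, x, hx⟩ := isAssociatedPrime_iff.mp hass
    obtain ⟨f, rfl⟩ := Ideal.Quotient.mk_surjective x
    have hmem : ∀ a, a ∈ q.comap (Ideal.Quotient.mk (derksenIdeal K d G)) ↔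
        a * f ∈ derksenIdeal K d G ^ n := by
      intro a
      rw [hx, Submodule.mem_colon_singleton, Submodule.mem_bot]
      exact Ideal.Quotient.eq_zero_iff_mem (I := derksenIdeal K d G ^ n) (a := a * f)
    intro a ha
    refine mem_derksenComponent_of_mul_mem_pow g n
      (Ideal.pow_right_mono hIg n ((hmem a).mp ha)) fun hf => ?_
    -- `f ∈ I_g ^ n` would give `t ^ n * f ∈ I ^ n`, that is, `t ^ n ∈ p`.
    refine htp (hpp.mem_of_pow_mem n ((hmem _).mpr ?_))
    refine Ideal.pow_right_mono htI n ?_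
    rw [mul_pow, Ideal.span_singleton_pow]
    exact Ideal.mul_mem_mul (Ideal.mem_span_singleton_self _) hf
  -- A prime `Q` with `I ≤ Q ≤ p` contains `t I_g` but not `t`, hence `I_g`, hence `p`.
  refine hmin ⟨⟨hpp, hIp⟩, fun Q hQ hQp => hpg.trans fun f hf => ?_⟩
  have htf : t * f ∈ Q := hQ.2 (htI (Ideal.mul_mem_mul (Ideal.mem_span_singleton_self t) hf))
  exact (hQ.1.mem_or_mem htf).resolve_left fun h => htp (hQp h)
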